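/- arXiv:2411.14561 — 2 statements merged into one kernel-verified Lean document; each statement's English description precedes it below -/
import Mathlib

section
/- Let p ≥ 2 be an integer. For every real polynomial u of degree at most p, the Gauss–Lobatto interpolant satisfies ∫_{−1}^{1} (I_{p−1}u)(x)² dx ≤ (2 + 4/(2p−3)) ∫_{−1}^{1} u(x)² dx. -/
open Polynomial

/-- The `n`-th Legendre polynomial, given by the Rodrigues formula
`P_n(x) = 1/(2^n n!) dⁿ/dxⁿ (x² − 1)ⁿ`, normalized so that `P_n(1) = 1`. -/
noncomputable def legendre (n : ℕ) : Polynomial ℝ :=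
  Polynomial.C (1 / (2 ^ n * (n.factorial : ℝ))) *
    (⇑(Polynomial.derivative (R := ℝ)))^[n] ((Polynomial.X ^ 2 - 1) ^ n)

/-- The polynomial `χ_p(x) = P_{p−1}'(x) (x² − 1)`, whose roots are the `p`
Gauss–Lobatto nodes. -/
noncomputable def lobattoChi (p : ℕ) : Polynomial ℝ :=
  Polynomial.derivative (legendre (p - 1)) * (Polynomial.X ^ 2 - 1)

/-!
Since `χ_p` is a multiple of `P_p - P_{p-2}` with `p` simple real roots, the interpolation error is
`u - v = a (P_p - P_{p-2})`. As `P_p` is orthogonal to `w = v - a P_{p-2}`, the splittings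
`u = w + a P_p` and `v = w + a P_{p-2}` give `‖u‖² = ‖w‖² + a² ‖P_p‖²` and
`‖v‖ ≤ ‖w‖ + |a| ‖P_{p-2}‖`, so by Cauchy–Schwarz `‖v‖² ≤ (1 + ‖P_{p-2}‖² / ‖P_p‖²) ‖u‖²`, where
`‖P_{p-2}‖² / ‖P_p‖² = (2p+1)/(2p-3)`.

The roots of `χ_p` are real because differentiation preserves splitting over `ℝ` (Rolle), and simple
because `χ_p' = (p-1) p P_{p-1}` while `χ_p = (p-1) (X P_{p-1} - P_{p-2})` and consecutive Legendre
polynomials are coprime.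
-/

section Polynomials

theorem isUnit_natCast_polynomial {K : Type*} [Field K] [CharZero K] {n : ℕ} (hn : n ≠ 0) :
    IsUnit (n : K[X]) := by
  rw [← C_eq_natCast, isUnit_C, isUnit_iff_ne_zero]
  exact_mod_cast hn

theorem dvd_of_splits_of_separable_of_eval_eq_zero {K : Type*} [Field K] {f g : K[X]}
    (hf : f.Splits) (hsep : f.Separable) (h : ∀ x, f.eval x = 0 → g.eval x = 0) : f ∣ g := by
  rcases eq_or_ne g 0 with rfl | hg
  · exact dvd_zero f
  refine hf.dvd_of_roots_le_roots hsep.ne_zero ((Multiset.le_iff_subset (nodup_roots hsep)).2 ?_)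
  intro x hx
  exact (mem_roots hg).2 (h x (isRoot_of_mem_roots hx))

theorem exists_eq_smul_of_dvd_of_natDegree_le {R : Type*} [CommSemiring R] [NoZeroDivisors R]
    {f g : R[X]} (hfg : f ∣ g) (hdeg : g.natDegree ≤ f.natDegree) : ∃ c : R, g = c • f := by
  rcases eq_or_ne g 0 with rfl | hg
  · exact ⟨0, (zero_smul R f).symm⟩
  obtain ⟨q, rfl⟩ := hfg
  obtain ⟨hf, hq⟩ := mul_ne_zero_iff.1 hg
  have hq_deg : q.natDegree = 0 := by
    rw [natDegree_mul hf hq] at hdeg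
    lia
  refine ⟨q.coeff 0, ?_⟩
  rw [smul_eq_C_mul, ← eq_C_of_natDegree_eq_zero hq_deg, mul_comm]

theorem splits_derivative {f : ℝ[X]} (hf : f.Splits) : (derivative f).Splits := by
  rw [splits_iff_card_roots] at hf ⊢
  have rolle := card_roots_le_derivative f
  have le_degree := card_roots' (derivative f)
  rw [natDegree_derivative] at le_degree ⊢
  lia

theorem splits_iterate_derivative {f : ℝ[X]} (hf : f.Splits) (k : ℕ) :
    (derivative^[k] f).Splits :=
  Function.Iterate.rec Splits hf (fun _ ↦ splits_derivative) k

theorem splits_X_sq_sub_one {R : Type*} [CommRing R] : (X ^ 2 - 1 : R[X]).Splits := by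
  have factorization : (X ^ 2 - 1 : R[X]) = (X - C 1) * (X - C (-1)) := by
    rw [C_neg, C_1]
    ring
  rw [factorization]
  exact (Splits.X_sub_C 1).mul (Splits.X_sub_C (-1))

theorem derivative_X_sq_sub_one_pow_succ {R : Type*} [CommRing R] (n : ℕ) :
    derivative ((X ^ 2 - 1 : R[X]) ^ (n + 1)) =
      C (2 * ((n : R) + 1)) * ((X ^ 2 - 1) ^ n * X) := by
  simp only [derivative_pow_succ, derivative_sub, derivative_X, derivative_one, C_mul, C_add,
    C_eq_natCast, C_ofNat, C_1]
  ring

theorem eval_iterate_derivative_pow_eq_zero {R : Type*} [CommSemiring R] {f : R[X]} {x : R}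
    (hx : f.eval x = 0) {k n : ℕ} (hk : k < n) : (derivative^[k] (f ^ n)).eval x = 0 := by
  obtain ⟨g, hg⟩ := pow_sub_dvd_iterate_derivative_pow f n k
  rw [hg, eval_mul, eval_pow, hx, zero_pow (Nat.sub_ne_zero_of_lt hk), zero_mul]

end Polynomials

section SemidefiniteForm

variable {𝕜 M : Type*} [Field 𝕜] [LinearOrder 𝕜] [IsStrictOrderedRing 𝕜] [AddCommGroup M]
  [Module 𝕜 M]

theorem bilinForm_add_self_le_of_orthogonal {B : LinearMap.BilinForm 𝕜 M} (hB : B.IsPosSemidef)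
    {w q r : M} {κ : 𝕜} (hκ : 0 < κ) (hwq : B w q = 0) (hr : B r r ≤ κ * B q q) :
    B (w + r) (w + r) ≤ (1 + κ) * B (w + q) (w + q) := by
  have young : 2 * κ * B w r ≤ κ ^ 2 * B w w + B r r := by
    have h := hB.nonneg (κ • w - r)
    simp only [map_sub, map_smul, LinearMap.sub_apply, LinearMap.smul_apply, smul_eq_mul,
      hB.eq r w] at h
    linarith
  have pythagoras : B (w + q) (w + q) = B w w + B q q := by
    simp only [map_add, LinearMap.add_apply, hB.eq q w, hwq]
    ring
  have expand : B (w + r) (w + r) = B w w + 2 * B w r + B r r := by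
    simp only [map_add, LinearMap.add_apply, hB.eq r w]
    ring
  rw [pythagoras, expand]
  refine le_of_mul_le_mul_left ?_ hκ
  linear_combination young + (1 + κ) * hr

end SemidefiniteForm

section L2Form

/-- The `L²(a, b)` inner product `∫_a^b f g` of real polynomials. -/
noncomputable def l2Form (a b : ℝ) : LinearMap.BilinForm ℝ ℝ[X] :=
  LinearMap.mk₂ ℝ (fun f g ↦ ∫ x in a..b, f.eval x * g.eval x)
    (fun f₁ f₂ g ↦ by
      simp only [eval_add, add_mul]
      exact intervalIntegral.integral_add (by apply Continuous.intervalIntegrable; fun_prop)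
        (by apply Continuous.intervalIntegrable; fun_prop))
    (fun c f g ↦ by
      simp only [eval_smul, smul_eq_mul, mul_assoc, intervalIntegral.integral_const_mul])
    (fun f g₁ g₂ ↦ by
      simp only [eval_add, mul_add]
      exact intervalIntegral.integral_add (by apply Continuous.intervalIntegrable; fun_prop)
        (by apply Continuous.intervalIntegrable; fun_prop))
    (fun c f g ↦ by
      simp only [eval_smul, smul_eq_mul, mul_left_comm _ c, intervalIntegral.integral_const_mul])

variable {a b : ℝ}

theorem l2Form_apply (f g : ℝ[X]) : l2Form a b f g = ∫ x in a..b, f.eval x * g.eval x := rfl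

theorem l2Form_self (f : ℝ[X]) : l2Form a b f f = ∫ x in a..b, f.eval x ^ 2 := by
  simp only [l2Form_apply, sq]

theorem isPosSemidef_l2Form (hab : a ≤ b) : (l2Form a b).IsPosSemidef where
  eq f g := by simp only [l2Form_apply, mul_comm]
  nonneg f := by
    rw [l2Form_self]
    exact intervalIntegral.integral_nonneg hab fun x _ ↦ sq_nonneg _

theorem l2Form_derivative_right (f g : ℝ[X]) :
    l2Form a b f (derivative g) =
      f.eval b * g.eval b - f.eval a * g.eval a - l2Form a b (derivative f) g :=
  intervalIntegral.integral_mul_deriv_eq_deriv_mul (fun x _ ↦ f.hasDerivAt x)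
    (fun x _ ↦ g.hasDerivAt x) (f.derivative.continuous.intervalIntegrable a b)
    (g.derivative.continuous.intervalIntegrable a b)

theorem l2Form_iterate_derivative_left {f : ℝ[X]} {k : ℕ}
    (ha : ∀ j < k, (derivative^[j] f).eval a = 0) (hb : ∀ j < k, (derivative^[j] f).eval b = 0)
    (g : ℝ[X]) :
    l2Form a b (derivative^[k] f) g = (-1) ^ k * l2Form a b f (derivative^[k] g) := by
  induction k generalizing g with
  | zero => simp
  | succ k ih =>
    have parts := l2Form_derivative_right (a := a) (b := b) (derivative^[k] f) g
    rw [ha k k.lt_succ_self, hb k k.lt_succ_self, ← Function.iterate_succ_apply' derivative]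
      at parts
    have step := ih (fun j hj ↦ ha j (hj.trans k.lt_succ_self))
      (fun j hj ↦ hb j (hj.trans k.lt_succ_self)) (derivative g)
    rw [← Function.iterate_succ_apply] at step
    linear_combination parts - step

end L2Form

section LegendreRecurrences

theorem legendre_zero : legendre 0 = 1 := by simp [legendre]

theorem legendre_succ (n : ℕ) :
    legendre (n + 1) =
      C (1 / (2 ^ n * (n.factorial : ℝ))) * derivative^[n] ((X ^ 2 - 1) ^ n * X) := by
  have normalization : 1 / (2 ^ (n + 1) * ((n + 1).factorial : ℝ)) * (2 * ((n : ℝ) + 1)) =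
      1 / (2 ^ n * (n.factorial : ℝ)) := by
    rw [Nat.factorial_succ]
    push_cast
    field_simp
    ring
  rw [legendre, Function.iterate_succ_apply, derivative_X_sq_sub_one_pow_succ,
    iterate_derivative_C_mul, ← mul_assoc, ← C_mul, normalization]

theorem derivative_legendre (n : ℕ) :
    derivative (legendre n) =
      C (1 / (2 ^ n * (n.factorial : ℝ))) * derivative^[n + 1] ((X ^ 2 - 1) ^ n) := by
  rw [legendre, derivative_C_mul, Function.iterate_succ_apply']

theorem derivative_legendre_succ (n : ℕ) :
    derivative (legendre (n + 1)) =
      X * derivative (legendre n) + ((n : ℝ[X]) + 1) * legendre n := by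
  rw [legendre_succ, derivative_C_mul, ← Function.iterate_succ_apply' derivative,
    iterate_derivative_mul_X, derivative_legendre, legendre, nsmul_eq_mul]
  push_cast
  ring

theorem X_mul_derivative_legendre_succ (n : ℕ) :
    X * derivative (legendre (n + 1)) =
      ((n : ℝ[X]) + 1) * legendre (n + 1) + derivative (legendre n) := by
  set f : ℝ[X] := (X ^ 2 - 1) ^ n with hf
  set c : ℝ := 1 / (2 ^ n * (n.factorial : ℝ))
  have rodrigues : 2 * ((n : ℝ[X]) + 1) * legendre (n + 1) =
      C c * derivative^[n + 1] ((X ^ 2 - 1) ^ (n + 1)) := by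
    rw [Function.iterate_succ_apply, derivative_X_sq_sub_one_pow_succ, iterate_derivative_C_mul,
      legendre_succ]
    simp only [C_mul, C_add, C_eq_natCast, C_ofNat, C_1]
    ring
  -- `rodrigues` and `leibniz` evaluate the same derivative in two ways; equating them is the claim.
  have leibniz : derivative^[n + 1] ((X ^ 2 - 1) ^ (n + 1)) =
      derivative^[n + 1] (f * X) * X + ((n : ℝ[X]) + 1) * derivative^[n] (f * X) -
        derivative^[n + 1] f := by
    have factor : (X ^ 2 - 1 : ℝ[X]) ^ (n + 1) = f * X * X - f := by
      rw [hf]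
      ring
    rw [factor, iterate_derivative_sub, iterate_derivative_mul_X (f * X), nsmul_eq_mul,
      Nat.add_sub_cancel, Nat.cast_succ]
  rw [leibniz] at rodrigues
  rw [derivative_legendre n, legendre_succ, derivative_C_mul,
    ← Function.iterate_succ_apply' derivative]
  rw [legendre_succ] at rodrigues
  linear_combination -rodrigues

theorem derivative_legendre_add_two (n : ℕ) :
    derivative (legendre (n + 2)) =
      (2 * (n : ℝ[X]) + 3) * legendre (n + 1) + derivative (legendre n) := by
  have h := derivative_legendre_succ (n + 1)
  push_cast at h
  linear_combination h + X_mul_derivative_legendre_succ n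

theorem lobattoChi_add_one (n : ℕ) :
    lobattoChi (n + 1) = ((n : ℝ[X]) + 1) * (legendre (n + 1) - X * legendre n) := by
  rw [lobattoChi, Nat.add_sub_cancel]
  linear_combination X_mul_derivative_legendre_succ n - X * derivative_legendre_succ n

theorem lobattoChi_add_two (n : ℕ) :
    lobattoChi (n + 2) = ((n : ℝ[X]) + 1) * (X * legendre (n + 1) - legendre n) := by
  rw [lobattoChi, show n + 2 - 1 = n + 1 from rfl]
  linear_combination X * X_mul_derivative_legendre_succ n - derivative_legendre_succ n

theorem legendre_add_two (n : ℕ) :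
    ((n : ℝ[X]) + 2) * legendre (n + 2) =
      (2 * (n : ℝ[X]) + 3) * X * legendre (n + 1) - ((n : ℝ[X]) + 1) * legendre n := by
  have h := lobattoChi_add_one (n + 1)
  push_cast at h
  linear_combination lobattoChi_add_two n - h

theorem lobattoChi_add_two_eq_smul (n : ℕ) :
    lobattoChi (n + 2) =
      (((n : ℝ) + 1) * (n + 2) / (2 * n + 3)) • (legendre (n + 2) - legendre n) := by
  have h := lobattoChi_add_one (n + 1)
  push_cast at h
  have cleared : (2 * (n : ℝ) + 3) • lobattoChi (n + 2) =
      (((n : ℝ) + 1) * (n + 2)) • (legendre (n + 2) - legendre n) := by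
    simp only [smul_eq_C_mul, C_mul, C_add, C_eq_natCast, C_ofNat, C_1]
    linear_combination ((n : ℝ[X]) + 2) * lobattoChi_add_two n + ((n : ℝ[X]) + 1) * h
  rw [div_eq_inv_mul, mul_smul, ← cleared, inv_smul_smul₀ (by positivity)]

theorem derivative_lobattoChi_add_one (n : ℕ) :
    derivative (lobattoChi (n + 1)) = (n : ℝ[X]) * ((n : ℝ[X]) + 1) * legendre n := by
  rw [lobattoChi_add_one]
  simp only [derivative_mul, derivative_sub, derivative_add, derivative_natCast, derivative_one,
    derivative_X]
  linear_combination ((n : ℝ[X]) + 1) * derivative_legendre_succ n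

theorem eval_legendre_of_sq_eq_one {x : ℝ} (hx : x ^ 2 = 1) (n : ℕ) :
    (legendre n).eval x = x ^ n := by
  induction n with
  | zero => simp [legendre_zero]
  | succ n ih =>
    have h := congrArg (eval x) (lobattoChi_add_one n)
    simp only [lobattoChi, eval_mul, eval_sub, eval_add, eval_pow, eval_X, eval_one, eval_natCast,
      hx, sub_self, mul_zero] at h
    have hstep := (mul_eq_zero.1 h.symm).resolve_left n.cast_add_one_ne_zero
    rw [sub_eq_zero.1 hstep, ih, pow_succ']

end LegendreRecurrences

section LegendreOrthogonality

theorem natDegree_legendre_le (n : ℕ) : (legendre n).natDegree ≤ n := by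
  have pow_degree : ((X ^ 2 - 1 : ℝ[X]) ^ n).natDegree ≤ n * 2 :=
    natDegree_pow_le_of_le n (by compute_degree)
  have derivative_degree := natDegree_iterate_derivative ((X ^ 2 - 1 : ℝ[X]) ^ n) n
  exact (natDegree_C_mul_le _ _).trans (by lia)

theorem natDegree_derivative_legendre_lt {m n : ℕ} (hmn : m < n) :
    (derivative (legendre m)).natDegree < n :=
  ((natDegree_derivative_le _).trans (Nat.sub_le _ _)).trans_lt
    ((natDegree_legendre_le m).trans_lt hmn)

theorem l2Form_legendre_eq_zero {n : ℕ} {q : ℝ[X]} (hq : q.natDegree < n) :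
    l2Form (-1) 1 (legendre n) q = 0 := by
  rw [legendre, ← smul_eq_C_mul, map_smul, LinearMap.smul_apply, l2Form_iterate_derivative_left
    (fun j ↦ eval_iterate_derivative_pow_eq_zero (by simp))
    (fun j ↦ eval_iterate_derivative_pow_eq_zero (by simp)),
    iterate_derivative_eq_zero hq, map_zero, mul_zero, smul_zero]

theorem l2Form_legendre_self (n : ℕ) :
    l2Form (-1) 1 (legendre n) (legendre n) = 2 / (2 * n + 1) := by
  rcases n with _ | n
  · rw [legendre_zero, l2Form_self]
    norm_num
  have parts := l2Form_derivative_right (a := -1) (b := 1) (legendre (n + 1)) (legendre (n + 2))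
  have orth_right : l2Form (-1) 1 (legendre (n + 1)) (derivative (legendre n)) = 0 :=
    l2Form_legendre_eq_zero (natDegree_derivative_legendre_lt n.lt_succ_self)
  have orth_left : l2Form (-1) 1 (derivative (legendre (n + 1))) (legendre (n + 2)) = 0 := by
    rw [(isPosSemidef_l2Form (by norm_num)).eq]
    exact l2Form_legendre_eq_zero (natDegree_derivative_legendre_lt (n + 1).lt_succ_self)
  have coeff_smul : (2 * (n : ℝ[X]) + 3) * legendre (n + 1) =
      (2 * (n : ℝ) + 3) • legendre (n + 1) := by
    simp only [smul_eq_C_mul, C_mul, C_add, C_eq_natCast, C_ofNat]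
  rw [derivative_legendre_add_two, map_add, orth_right, orth_left, coeff_smul, map_smul,
    smul_eq_mul] at parts
  simp only [eval_legendre_of_sq_eq_one (one_pow 2), eval_legendre_of_sq_eq_one neg_one_sq,
    one_pow] at parts
  have sign : (-1 : ℝ) ^ (n + 1) * (-1) ^ (n + 2) = -1 := by
    rw [← pow_add]
    exact Odd.neg_one_pow ⟨n + 1, by ring⟩
  rw [eq_div_iff (by positivity)]
  push_cast
  linear_combination parts - sign

theorem l2Form_legendre_self_eq_mul_add_two (n : ℕ) :
    l2Form (-1) 1 (legendre n) (legendre n) =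
      (2 * n + 5) / (2 * n + 1) * l2Form (-1) 1 (legendre (n + 2)) (legendre (n + 2)) := by
  rw [l2Form_legendre_self, l2Form_legendre_self]
  push_cast
  field_simp
  ring

theorem natDegree_legendre (n : ℕ) : (legendre n).natDegree = n := by
  refine (natDegree_legendre_le n).antisymm (not_lt.1 fun hlt ↦ ?_)
  have norm_eq_zero := l2Form_legendre_eq_zero hlt
  rw [l2Form_legendre_self] at norm_eq_zero
  have : 0 < 2 / (2 * (n : ℝ) + 1) := by positivity
  exact this.ne' norm_eq_zero

end LegendreOrthogonality

section LobattoNodes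

theorem splits_lobattoChi (p : ℕ) : (lobattoChi p).Splits :=
  (splits_derivative ((splits_iterate_derivative (splits_X_sq_sub_one.pow _) _).C_mul _)).mul
    splits_X_sq_sub_one

theorem isCoprime_legendre_succ (n : ℕ) : IsCoprime (legendre n) (legendre (n + 1)) := by
  induction n with
  | zero =>
    rw [legendre_zero]
    exact isCoprime_one_left
  | succ n ih =>
    have recurrence : ((n + 2 : ℕ) : ℝ[X]) * legendre (n + 2) =
        -(((n + 1 : ℕ) : ℝ[X]) * legendre n) +
          legendre (n + 1) * ((2 * (n : ℝ[X]) + 3) * X) := by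
      push_cast
      linear_combination legendre_add_two n
    rw [← isCoprime_mul_unit_left_right (isUnit_natCast_polynomial (n + 1).succ_ne_zero),
      recurrence, IsCoprime.add_mul_left_right_iff, IsCoprime.neg_right_iff,
      isCoprime_mul_unit_left_right (isUnit_natCast_polynomial n.succ_ne_zero)]
    exact ih.symm

theorem separable_lobattoChi_add_two (n : ℕ) : (lobattoChi (n + 2)).Separable := by
  have chi_eq : lobattoChi (n + 2) =
      ((n + 1 : ℕ) : ℝ[X]) * (-legendre n + legendre (n + 1) * X) := by
    rw [lobattoChi_add_two]
    push_cast
    ring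
  have derivative_chi_eq : derivative (lobattoChi (n + 2)) =
      ((n + 1 : ℕ) : ℝ[X]) * (((n + 2 : ℕ) : ℝ[X]) * legendre (n + 1)) := by
    rw [derivative_lobattoChi_add_one (n + 1)]
    push_cast
    ring
  rw [Separable, derivative_chi_eq, chi_eq,
    isCoprime_mul_unit_left (isUnit_natCast_polynomial n.succ_ne_zero),
    isCoprime_mul_unit_left_right (isUnit_natCast_polynomial (n + 1).succ_ne_zero),
    IsCoprime.add_mul_left_left_iff, IsCoprime.neg_left_iff]
  exact isCoprime_legendre_succ n

theorem natDegree_lobattoChi_add_two (n : ℕ) : (lobattoChi (n + 2)).natDegree = n + 2 := by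
  have derivative_degree : (derivative (legendre (n + 1))).natDegree = n := by
    rw [natDegree_derivative, natDegree_legendre, Nat.add_sub_cancel]
  have quadratic_degree : (X ^ 2 - 1 : ℝ[X]).natDegree = 2 := by compute_degree!
  have hne := (separable_lobattoChi_add_two n).ne_zero
  rw [lobattoChi] at hne ⊢
  rw [natDegree_mul (left_ne_zero_of_mul hne) (right_ne_zero_of_mul hne), quadratic_degree]
  exact congrArg (· + 2) derivative_degree

theorem exists_eq_smul_legendre_sub_of_eval_lobattoChi {n : ℕ} {d : ℝ[X]}
    (hd : d.natDegree ≤ n + 2) (h : ∀ x, (lobattoChi (n + 2)).eval x = 0 → d.eval x = 0) :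
    ∃ c : ℝ, d = c • (legendre (n + 2) - legendre n) := by
  have hdvd := dvd_of_splits_of_separable_of_eval_eq_zero (splits_lobattoChi _)
    (separable_lobattoChi_add_two n) h
  obtain ⟨c, rfl⟩ := exists_eq_smul_of_dvd_of_natDegree_le hdvd
    (hd.trans (natDegree_lobattoChi_add_two n).ge)
  exact ⟨_, by rw [lobattoChi_add_two_eq_smul, smul_smul]⟩

end LobattoNodes

theorem l2Form_self_le_of_sub_eq_smul_legendre_sub {n : ℕ} {u v : ℝ[X]} {c : ℝ}
    (hv : v.natDegree < n + 2) (huv : u - v = c • (legendre (n + 2) - legendre n)) :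
    l2Form (-1) 1 v v ≤ (1 + (2 * n + 5) / (2 * n + 1)) * l2Form (-1) 1 u u := by
  set w := v - c • legendre n with hw
  have v_eq : v = w + c • legendre n := by rw [hw, sub_add_cancel]
  have u_eq : u = w + c • legendre (n + 2) := by
    rw [← sub_add_cancel u v, huv, hw, smul_sub]
    abel
  have w_degree : w.natDegree < n + 2 := by
    have := natDegree_legendre n
    have := natDegree_smul_le c (legendre n)
    exact (natDegree_sub_le _ _).trans_lt (by lia)
  have posSemidef : (l2Form (-1) 1).IsPosSemidef := isPosSemidef_l2Form (by norm_num)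
  have w_orth : l2Form (-1) 1 w (c • legendre (n + 2)) = 0 := by
    rw [map_smul, posSemidef.eq, l2Form_legendre_eq_zero w_degree, smul_zero]
  have norm_ratio : l2Form (-1) 1 (c • legendre n) (c • legendre n) =
      (2 * n + 5) / (2 * n + 1) *
        l2Form (-1) 1 (c • legendre (n + 2)) (c • legendre (n + 2)) := by
    simp only [map_smul, LinearMap.smul_apply, smul_eq_mul, l2Form_legendre_self_eq_mul_add_two n]
    ring
  rw [u_eq, v_eq]
  exact bilinForm_add_self_le_of_orthogonal posSemidef (by positivity) w_orth norm_ratio.le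

/-- L² stability of Gauss–Lobatto interpolation: if `u` has degree at most `p` and
`v` is a polynomial of degree at most `p − 1` agreeing with `u` at the `p`
Gauss–Lobatto nodes (the roots of `χ_p`), i.e. `v = I_{p−1}u`, then
`∫_{−1}^{1} v² ≤ (2 + 4/(2p−3)) ∫_{−1}^{1} u²`. -/
theorem gauss_lobatto_interp_l2_stability (p : ℕ) (hp : 2 ≤ p)
    (u v : Polynomial ℝ) (hu : u.natDegree ≤ p) (hv : v.natDegree ≤ p - 1)
    (hinterp : ∀ x : ℝ, (lobattoChi p).eval x = 0 → v.eval x = u.eval x) :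
    ∫ x in (-1 : ℝ)..1, v.eval x ^ 2 ≤
      (2 + 4 / (2 * (p : ℝ) - 3)) * ∫ x in (-1 : ℝ)..1, u.eval x ^ 2 := by
  obtain ⟨n, rfl⟩ := Nat.exists_eq_add_of_le' hp
  obtain ⟨c, hc⟩ : ∃ c : ℝ, u - v = c • (legendre (n + 2) - legendre n) :=
    exists_eq_smul_legendre_sub_of_eval_lobattoChi
      ((natDegree_sub_le u v).trans (max_le hu (by lia)))
      fun x hx ↦ by rw [eval_sub, hinterp x hx, sub_self]
  have constant : 2 + 4 / (2 * ((n + 2 : ℕ) : ℝ) - 3) = 1 + (2 * n + 5) / (2 * n + 1) := by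
    rw [show 2 * ((n + 2 : ℕ) : ℝ) - 3 = 2 * n + 1 by push_cast; ring]
    field_simp
    ring
  rw [constant, ← l2Form_self, ← l2Form_self]
  exact l2Form_self_le_of_sub_eq_smul_legendre_sub (by lia) hc
end

section
/- Let p ≥ 2 be an integer. For every real polynomial u of degree at most p, the Gauss–Lobatto interpolation error satisfies ∫_{−1}^{1} (u(x) − (I_{p−1}u)(x))² dx ≤ (2/(4p² − 4p − 3)) ∫_{−1}^{1} (u'(x))² dx. -/
open Polynomial

/-!
The error `e = u - I_{p-1} u` has degree at most `p` and vanishes at the `p` simple real roots of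
`χ_p`, so it is a multiple of `χ_p`. Legendre's equation says `χ_p' = p (p - 1) P_{p-1}`. Hence `e'`
is orthogonal in `L²(-1, 1)` to `(I_{p-1} u)'`, which has degree less than `p - 1`, and
`‖e'‖ ≤ ‖u'‖`. It also gives `(x² - 1) e'' = p (p - 1) e`; testing this equation against `e` and
against `x e'` yields `2 ‖e'‖² = (4 p (p - 1) - 3) ‖e‖²`.
-/

section Integral

/-- Integration over `[a, b]` as a linear functional on real polynomials, so that the `L²` inner
product of `f` and `g` is `polyIntegral a b (f * g)` and no integrability side goals arise. -/
noncomputable def polyIntegral (a b : ℝ) : ℝ[X] →ₗ[ℝ] ℝ where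
  toFun f := ∫ x in a..b, f.eval x
  map_add' f g := by
    simp only [eval_add]
    exact intervalIntegral.integral_add (f.continuous.intervalIntegrable a b)
      (g.continuous.intervalIntegrable a b)
  map_smul' c f := by simp

variable {a b : ℝ}

theorem polyIntegral_apply (f : ℝ[X]) : polyIntegral a b f = ∫ x in a..b, f.eval x :=
  rfl

theorem polyIntegral_C_mul (c : ℝ) (f : ℝ[X]) :
    polyIntegral a b (C c * f) = c * polyIntegral a b f := by
  rw [← smul_eq_C_mul, map_smul, smul_eq_mul]

theorem polyIntegral_sq_nonneg (hab : a ≤ b) (f : ℝ[X]) : 0 ≤ polyIntegral a b (f ^ 2) := by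
  simpa only [polyIntegral_apply, eval_pow] using
    intervalIntegral.integral_nonneg hab fun x _ => sq_nonneg (f.eval x)

theorem polyIntegral_derivative (f : ℝ[X]) :
    polyIntegral a b (derivative f) = f.eval b - f.eval a :=
  intervalIntegral.integral_eq_sub_of_hasDerivAt (fun x _ => f.hasDerivAt x)
    ((derivative f).continuous.intervalIntegrable a b)

theorem polyIntegral_derivative_eq_zero {f : ℝ[X]} (ha : f.eval a = 0) (hb : f.eval b = 0) :
    polyIntegral a b (derivative f) = 0 := by
  rw [polyIntegral_derivative, ha, hb, sub_zero]

theorem polyIntegral_mul_derivative (f g : ℝ[X]) (ha : (f * g).eval a = 0)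
    (hb : (f * g).eval b = 0) :
    polyIntegral a b (f * derivative g) = -polyIntegral a b (derivative f * g) := by
  rw [eq_neg_iff_add_eq_zero, add_comm, ← map_add, ← derivative_mul]
  exact polyIntegral_derivative_eq_zero ha hb

theorem polyIntegral_mul_iterate_derivative_pow {w : ℝ[X]} (ha : w.eval a = 0)
    (hb : w.eval b = 0) (n : ℕ) {k : ℕ} (hk : k ≤ n) (q : ℝ[X]) :
    polyIntegral a b (q * derivative^[k] (w ^ n)) =
      (-1) ^ k * polyIntegral a b (derivative^[k] q * w ^ n) := by
  induction k generalizing q with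
  | zero => simp
  | succ k ih =>
    have w_dvd : w ∣ derivative^[k] (w ^ n) :=
      (dvd_pow_self w (by lia)).trans (pow_sub_dvd_iterate_derivative_pow w n k)
    have vanish {c : ℝ} (hc : w.eval c = 0) : (q * derivative^[k] (w ^ n)).eval c = 0 :=
      eval_eq_zero_of_dvd_of_eval_eq_zero (w_dvd.mul_left q) hc
    rw [Function.iterate_succ_apply', polyIntegral_mul_derivative _ _ (vanish ha) (vanish hb),
      ih (by lia), Function.iterate_succ_apply]
    ring

theorem polyIntegral_sq_le_of_orthogonal (hab : a ≤ b) {f g : ℝ[X]}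
    (h : polyIntegral a b (f * g) = 0) :
    polyIntegral a b (g ^ 2) ≤ polyIntegral a b ((f + g) ^ 2) := by
  have expand : (f + g) ^ 2 = f ^ 2 + C 2 * (f * g) + g ^ 2 := by rw [C_ofNat]; ring
  rw [expand, map_add, map_add, polyIntegral_C_mul, h]
  linarith [polyIntegral_sq_nonneg hab f]

end Integral

section EigenvalueEquation

variable {y : ℝ[X]} {c : ℝ}

theorem polyIntegral_one_sub_X_sq_mul_derivative_sq
    (hode : (X ^ 2 - 1) * derivative (derivative y) = C c * y)
    (hl : y.eval (-1) = 0) (hr : y.eval 1 = 0) :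
    polyIntegral (-1) 1 ((1 - X ^ 2) * derivative y ^ 2) =
      (c - 1) * polyIntegral (-1) 1 (y ^ 2) := by
  have exact_form : derivative (X * y ^ 2 - (X ^ 2 - 1) * y * derivative y) =
      (1 - X ^ 2) * derivative y ^ 2 - C (c - 1) * y ^ 2 := by
    simp only [derivative_sub, derivative_mul, derivative_X, derivative_one, derivative_sq,
      C_sub, C_1, C_ofNat]
    linear_combination -y * hode
  rw [← sub_eq_zero, ← polyIntegral_C_mul, ← map_sub, ← exact_form]
  exact polyIntegral_derivative_eq_zero (by simp [hl]) (by simp [hr])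

theorem two_mul_polyIntegral_derivative_sq
    (hode : (X ^ 2 - 1) * derivative (derivative y) = C c * y)
    (hl : y.eval (-1) = 0) (hr : y.eval 1 = 0) :
    2 * polyIntegral (-1) 1 (derivative y ^ 2) =
      (4 * c - 3) * polyIntegral (-1) 1 (y ^ 2) := by
  have exact_form : derivative (X * (X ^ 2 - 1) * derivative y ^ 2 - C c * (X * y ^ 2)) =
      C 2 * derivative y ^ 2 - C 3 * ((1 - X ^ 2) * derivative y ^ 2) - C c * y ^ 2 := by
    simp only [derivative_sub, derivative_mul, derivative_X, derivative_one, derivative_sq,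
      derivative_C, C_ofNat]
    linear_combination 2 * X * derivative y * hode
  have pohozaev := polyIntegral_derivative_eq_zero (a := -1) (b := 1)
    (f := X * (X ^ 2 - 1) * derivative y ^ 2 - C c * (X * y ^ 2)) (by simp [hl]) (by simp [hr])
  rw [exact_form, map_sub, map_sub, polyIntegral_C_mul, polyIntegral_C_mul, polyIntegral_C_mul,
    polyIntegral_one_sub_X_sq_mul_derivative_sq hode hl hr] at pohozaev
  linarith

end EigenvalueEquation

section Roots

theorem natDegree_iterate_derivative_eq {R : Type*} [Semiring R] [IsAddTorsionFree R] (f : R[X])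
    (k : ℕ) : (derivative^[k] f).natDegree = f.natDegree - k := by
  induction k with
  | zero => simp
  | succ k ih => rw [Function.iterate_succ_apply', natDegree_derivative, ih, Nat.sub_sub]

theorem nodup_roots_of_dvd_mul_derivative_derivative {K : Type*} [Field K] [CharZero K]
    {q y : K[X]} (hq : q.Separable) (hy : y ∣ q * derivative (derivative y)) :
    y.roots.Nodup := by
  classical
  -- At a root of multiplicity `m ≥ 2` of `y`, the product `q * y''` has order at most `m - 1`.
  refine Multiset.nodup_iff_count_le_one.2 fun x => ?_
  rw [count_roots]
  by_contra! multiple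
  obtain ⟨-, root⟩ := rootMultiplicity_pos'.1 (zero_lt_one.trans multiple)
  have mult_derivative := derivative_rootMultiplicity_of_root root
  obtain ⟨derivative_ne, root_derivative⟩ :
      derivative y ≠ 0 ∧ (derivative y).IsRoot x := rootMultiplicity_pos'.1 (by lia)
  have mult_derivative_derivative := derivative_rootMultiplicity_of_root root_derivative
  have product_ne : q * derivative (derivative y) ≠ 0 :=
    mul_ne_zero hq.ne_zero <| derivative_ne_zero.2
      (natDegree_pos_iff_degree_pos.2 (degree_pos_of_root derivative_ne root_derivative)).ne'
  have mult_le := rootMultiplicity_le_rootMultiplicity_of_dvd product_ne hy x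
  rw [rootMultiplicity_mul product_ne] at mult_le
  have mult_q := rootMultiplicity_le_one_of_separable hq x
  lia

theorem exists_eq_C_mul_of_eval_eq_zero {K : Type*} [Field K] {f g : K[X]} (hg : g.Splits)
    (hg₀ : g ≠ 0) (hroots : g.roots.Nodup) (hdeg : f.natDegree ≤ g.natDegree)
    (hf : ∀ x, g.eval x = 0 → f.eval x = 0) : ∃ t : K, f = C t * g := by
  rcases eq_or_ne f 0 with rfl | hf₀
  · exact ⟨0, by simp⟩
  have roots_le : g.roots ≤ f.roots :=
    (Multiset.le_iff_subset hroots).2 fun x hx =>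
      (mem_roots hf₀).2 (hf x (isRoot_of_mem_roots hx))
  obtain ⟨r, rfl⟩ := hg.dvd_of_roots_le_roots hg₀ roots_le
  rw [natDegree_mul hg₀ (right_ne_zero_of_mul hf₀)] at hdeg
  obtain ⟨t, rfl⟩ := natDegree_eq_zero.1 (show r.natDegree = 0 by lia)
  exact ⟨t, mul_comm g (C t)⟩

end Roots

section Legendre

theorem natDegree_X_sq_sub_one {R : Type*} [CommRing R] [Nontrivial R] :
    (X ^ 2 - 1 : R[X]).natDegree = 2 := by
  compute_degree!

theorem separable_X_sq_sub_one {K : Type*} [Field K] [NeZero (2 : K)] :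
    (X ^ 2 - 1 : K[X]).Separable :=
  X_pow_sub_one_separable_iff.2 (mod_cast two_ne_zero)

theorem derivative_X_sq_sub_one_pow_mul {R : Type*} [CommRing R] (n : ℕ) :
    derivative ((X ^ 2 - 1 : R[X]) ^ n) * (X ^ 2 - 1) =
      C (2 * n : R) * (X * (X ^ 2 - 1) ^ n) := by
  cases n with
  | zero => simp
  | succ n =>
    rw [derivative_pow_succ, derivative_sub, derivative_X_pow, derivative_one]
    push_cast [C_mul, C_add, C_ofNat, C_eq_natCast, C_1]
    ring

theorem X_sq_sub_one_pow_ode {R : Type*} [CommRing R] (n : ℕ) :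
    derivative^[2] ((X ^ 2 - 1 : R[X]) ^ n) * X ^ 2 - derivative^[2] ((X ^ 2 - 1) ^ n) =
      C (2 * (n - 1) : R) * (derivative ((X ^ 2 - 1) ^ n) * X) +
        C (2 * n : R) * (X ^ 2 - 1) ^ n := by
  have differentiated := congrArg derivative (derivative_X_sq_sub_one_pow_mul (R := R) n)
  simp only [derivative_mul, derivative_C, derivative_sub, derivative_X_sq, derivative_one,
    derivative_X] at differentiated
  simp only [Function.iterate_succ_apply, Function.iterate_zero_apply, C_mul, C_sub, C_1,
    C_ofNat] at differentiated ⊢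
  linear_combination differentiated

theorem rodrigues_ode {R : Type*} [CommRing R] (n : ℕ) :
    derivative (derivative (derivative^[n] ((X ^ 2 - 1 : R[X]) ^ n)) * (X ^ 2 - 1)) =
      C (n * (n + 1) : R) * derivative^[n] ((X ^ 2 - 1) ^ n) := by
  have differentiated := congrArg derivative^[n] (X_sq_sub_one_pow_ode (R := R) n)
  have cast_mul_pred : ((n * (n - 1) : ℕ) : R[X]) = n * (n - 1) := by
    cases n <;> simp
  rw [iterate_derivative_sub, iterate_derivative_derivative_mul_X_sq, iterate_map_add,
    iterate_derivative_C_mul, iterate_derivative_C_mul, iterate_derivative_derivative_mul_X,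
    ← Function.iterate_add_apply] at differentiated
  simp only [nsmul_eq_mul, cast_mul_pred, Function.iterate_succ_apply'] at differentiated
  simp only [derivative_mul, derivative_sub, derivative_X_sq, derivative_one]
  push_cast [C_mul, C_add, C_sub, C_1, C_ofNat, C_eq_natCast] at differentiated ⊢
  linear_combination differentiated

theorem splits_legendre (n : ℕ) : (legendre n).Splits :=
  (splits_iterate_derivative (splits_X_sq_sub_one.pow n) n).C_mul _

theorem polyIntegral_mul_legendre_eq_zero {n : ℕ} {q : ℝ[X]} (hq : q.degree < n) :
    polyIntegral (-1) 1 (q * legendre n) = 0 := by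
  rw [legendre, mul_left_comm, polyIntegral_C_mul,
    polyIntegral_mul_iterate_derivative_pow (by simp) (by simp) n le_rfl,
    iterate_derivative_eq_zero_of_degree_lt hq]
  simp

end Legendre

section LobattoChi

theorem derivative_lobattoChi_succ (n : ℕ) :
    derivative (lobattoChi (n + 1)) = C (n * (n + 1) : ℝ) * legendre n := by
  rw [lobattoChi, Nat.add_sub_cancel, legendre, derivative_C_mul, mul_assoc, derivative_C_mul,
    rodrigues_ode, mul_left_comm]

theorem lobattoChi_succ_ode (n : ℕ) :
    (X ^ 2 - 1) * derivative (derivative (lobattoChi (n + 1))) =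
      C (n * (n + 1) : ℝ) * lobattoChi (n + 1) := by
  rw [derivative_lobattoChi_succ, derivative_C_mul, lobattoChi, Nat.add_sub_cancel]
  ring

theorem lobattoChi_eval_neg_one (p : ℕ) : (lobattoChi p).eval (-1) = 0 := by
  simp [lobattoChi]

theorem lobattoChi_eval_one (p : ℕ) : (lobattoChi p).eval 1 = 0 := by
  simp [lobattoChi]

theorem natDegree_lobattoChi_succ {n : ℕ} (hn : n ≠ 0) :
    (lobattoChi (n + 1)).natDegree = n + 1 := by
  have derivative_legendre_ne : derivative (legendre n) ≠ 0 :=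
    derivative_ne_zero.2 (by rwa [natDegree_legendre])
  rw [lobattoChi, Nat.add_sub_cancel, natDegree_mul derivative_legendre_ne
    separable_X_sq_sub_one.ne_zero, natDegree_derivative, natDegree_legendre,
    natDegree_X_sq_sub_one]
  lia

theorem nodup_roots_lobattoChi_succ (n : ℕ) : (lobattoChi (n + 1)).roots.Nodup := by
  refine nodup_roots_of_dvd_mul_derivative_derivative separable_X_sq_sub_one ?_
  rw [lobattoChi_succ_ode]
  exact dvd_mul_left _ _

theorem exists_eq_C_mul_lobattoChi {n : ℕ} (hn : n ≠ 0) {e : ℝ[X]} (hdeg : e.natDegree ≤ n + 1)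
    (he : ∀ x, (lobattoChi (n + 1)).eval x = 0 → e.eval x = 0) :
    ∃ t : ℝ, e = C t * lobattoChi (n + 1) := by
  have natDegree_chi := natDegree_lobattoChi_succ hn
  refine exists_eq_C_mul_of_eval_eq_zero (splits_lobattoChi _) ?_
    (nodup_roots_lobattoChi_succ n) (hdeg.trans natDegree_chi.ge) he
  exact ne_zero_of_natDegree_gt (n := n) (by lia)

theorem two_mul_polyIntegral_derivative_C_mul_lobattoChi_sq (n : ℕ) (t : ℝ) :
    2 * polyIntegral (-1) 1 (derivative (C t * lobattoChi (n + 1)) ^ 2) =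
      (4 * (n * (n + 1)) - 3) * polyIntegral (-1) 1 ((C t * lobattoChi (n + 1)) ^ 2) := by
  refine two_mul_polyIntegral_derivative_sq ?_ (by simp [lobattoChi_eval_neg_one])
    (by simp [lobattoChi_eval_one])
  rw [derivative_C_mul, derivative_C_mul]
  linear_combination C t * lobattoChi_succ_ode n

theorem polyIntegral_derivative_mul_derivative_C_mul_lobattoChi {n : ℕ} {v : ℝ[X]}
    (hv : v.natDegree ≤ n) (t : ℝ) :
    polyIntegral (-1) 1 (derivative v * derivative (C t * lobattoChi (n + 1))) = 0 := by
  have degree_lt : (derivative v).degree < n := by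
    rcases eq_or_ne v 0 with rfl | hv₀
    · simp
    · exact (degree_derivative_lt hv₀).trans_le (degree_le_of_natDegree_le hv)
  rw [derivative_C_mul, derivative_lobattoChi_succ, mul_left_comm, polyIntegral_C_mul,
    mul_left_comm, polyIntegral_C_mul, polyIntegral_mul_legendre_eq_zero degree_lt,
    mul_zero, mul_zero]

end LobattoChi

/-- Gauss–Lobatto interpolation error estimate: if `u` has degree at most `p` and
`v = I_{p−1}u` is the polynomial of degree at most `p − 1` agreeing with `u` at the
`p` Gauss–Lobatto nodes (the roots of `χ_p`), then
`∫_{−1}^{1} (u − v)² ≤ (2/(4p² − 4p − 3)) ∫_{−1}^{1} (u')²`. -/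
theorem gauss_lobatto_interp_error (p : ℕ) (hp : 2 ≤ p)
    (u v : Polynomial ℝ) (hu : u.natDegree ≤ p) (hv : v.natDegree ≤ p - 1)
    (hinterp : ∀ x : ℝ, (lobattoChi p).eval x = 0 → v.eval x = u.eval x) :
    ∫ x in (-1 : ℝ)..1, (u.eval x - v.eval x) ^ 2 ≤
      (2 / (4 * (p : ℝ) ^ 2 - 4 * p - 3)) *
        ∫ x in (-1 : ℝ)..1, (Polynomial.derivative u).eval x ^ 2 := by
  obtain ⟨n, rfl⟩ : ∃ n, p = n + 1 := ⟨p - 1, by lia⟩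
  obtain ⟨t, ht⟩ : ∃ t : ℝ, u - v = C t * lobattoChi (n + 1) :=
    exists_eq_C_mul_lobattoChi (by lia) (natDegree_sub_le_iff_left (by lia) |>.2 hu)
      fun x hx => by rw [eval_sub, hinterp x hx, sub_self]
  have norm_eq : 2 * polyIntegral (-1) 1 (derivative (u - v) ^ 2) =
      (4 * (n * (n + 1)) - 3) * polyIntegral (-1) 1 ((u - v) ^ 2) :=
    ht ▸ two_mul_polyIntegral_derivative_C_mul_lobattoChi_sq n t
  have orthogonal : polyIntegral (-1) 1 (derivative v * derivative (u - v)) = 0 :=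
    ht ▸ polyIntegral_derivative_mul_derivative_C_mul_lobattoChi hv t
  have norm_le := polyIntegral_sq_le_of_orthogonal (by norm_num) orthogonal
  rw [← derivative_add, add_sub_cancel] at norm_le
  have denom_eq : 4 * ((n + 1 : ℕ) : ℝ) ^ 2 - 4 * (n + 1 : ℕ) - 3 = 4 * (n * (n + 1)) - 3 := by
    push_cast; ring
  have denom_pos : (0 : ℝ) < 4 * (n * (n + 1)) - 3 := by
    have : (1 : ℝ) ≤ n := by exact_mod_cast Nat.le_of_lt_succ hp
    nlinarith
  simp only [← eval_sub, ← eval_pow, ← polyIntegral_apply]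
  rw [denom_eq, div_mul_eq_mul_div, le_div_iff₀ denom_pos]
  linarith
end
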